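/- Let d∈(0,1] and Ω̂^d=ℝ×(0,d). Let ψ∈C²(Ω̂^d) be Lipschitz continuous on the closure of Ω̂^d, with 0≤ψ≤Q, and suppose Δψ(x)=f(ψ(x)) for all x∈Ω̂^d (where Δψ=∂²ψ/∂x₁²+∂²ψ/∂x₂²), ψ(x₁,0)=0 and ψ(x₁,d)=Q for all x₁∈ℝ, and ∂_{x₂}ψ≥0 in Ω̂^d. Then ψ is independent of x₁: there is a function of one variable g such that ψ(x₁,x₂)=g(x₂) for all (x₁,x₂)∈Ω̂^d. -/

import Mathlib

open Real Set MeasureTheory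

noncomputable section

/-- Partial derivative in the `x₁` direction. -/
def pd1 (φ : ℝ × ℝ → ℝ) (x : ℝ × ℝ) : ℝ := fderiv ℝ φ x (1, 0)

/-- Partial derivative in the `x₂` direction. -/
def pd2 (φ : ℝ × ℝ → ℝ) (x : ℝ × ℝ) : ℝ := fderiv ℝ φ x (0, 1)

/-- The Laplacian `Δφ = ∂²φ/∂x₁² + ∂²φ/∂x₂²`. -/
def lap (φ : ℝ × ℝ → ℝ) (x : ℝ × ℝ) : ℝ := pd1 (pd1 φ) x + pd2 (pd2 φ) x

/-- The cubic `t ↦ Q (3t² - 2t³)` maps the unit interval onto `[0, Q]`. -/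
lemma exists_cubic_eq {Q s : ℝ} (hs : s ∈ Icc 0 Q) :
    ∃ t ∈ Icc (0 : ℝ) 1, Q * (3 * t ^ 2 - 2 * t ^ 3) = s := by
  have hcont : ContinuousOn (fun t : ℝ => Q * (3 * t ^ 2 - 2 * t ^ 3)) (Icc 0 1) := by fun_prop
  have h := intermediate_value_Icc zero_le_one hcont
  obtain ⟨t, ht, hts⟩ := h (show s ∈ Icc _ _ by norm_num; exact hs)
  exact ⟨t, ht, hts⟩

lemma cubic_mem_Icc {Q t : ℝ} (hQ : 0 < Q) (ht : t ∈ Icc (0 : ℝ) 1) :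
    Q * (3 * t ^ 2 - 2 * t ^ 3) ∈ Icc 0 Q := by
  obtain ⟨h0, h1⟩ := ht
  have h2 : 0 ≤ 3 * t ^ 2 - 2 * t ^ 3 := by
    nlinarith [mul_nonneg (sq_nonneg t) (sub_nonneg.2 h1), sq_nonneg t]
  have h3 : 3 * t ^ 2 - 2 * t ^ 3 ≤ 1 := by
    nlinarith [mul_nonneg (sq_nonneg (1 - t)) h0, sq_nonneg (1 - t)]
  exact ⟨by positivity, by nlinarith⟩

lemma hasDerivAt_cubic (Q t : ℝ) :
    HasDerivAt (fun t : ℝ => Q * (3 * t ^ 2 - 2 * t ^ 3)) (6 * Q * (t * (1 - t))) t := by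
  have h := (((hasDerivAt_pow 2 t).const_mul 3).sub ((hasDerivAt_pow 3 t).const_mul 2)).const_mul Q
  refine h.congr_deriv ?_
  norm_num
  ring

/-- The inverse of the cubic is Hölder continuous of exponent `1/2`, hence continuous. -/
lemma continuousOn_inverse_cubic {Q : ℝ} (hQ : 0 < Q) {κ : ℝ → ℝ}
    (hκ : ∀ t ∈ Icc (0 : ℝ) 1, κ (Q * (3 * t ^ 2 - 2 * t ^ 3)) = t) :
    ContinuousOn κ (Icc 0 Q) := by
  have key : ∀ t ∈ Icc (0 : ℝ) 1, ∀ r ∈ Icc (0 : ℝ) 1, t ≤ r →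
      Q * (r - t) ^ 2 ≤ Q * (3 * r ^ 2 - 2 * r ^ 3) - Q * (3 * t ^ 2 - 2 * t ^ 3) := by
    rintro t ⟨ht0, ht1⟩ r ⟨hr0, hr1⟩ htr
    have h1 : 0 ≤ t * (1 - t) + t * (1 - r) + r * (1 - r) := by
      have := sub_nonneg.2 ht1
      have := sub_nonneg.2 hr1
      positivity
    have h2 : 0 ≤ Q * (r - t) := mul_nonneg hQ.le (sub_nonneg.2 htr)
    nlinarith [mul_nonneg h2 h1]
  have key2 : ∀ s ∈ Icc 0 Q, ∀ s' ∈ Icc 0 Q, (κ s - κ s') ^ 2 ≤ |s - s'| / Q := by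
    intro s hs s' hs'
    obtain ⟨t, ht, rfl⟩ := exists_cubic_eq hs
    obtain ⟨r, hr, rfl⟩ := exists_cubic_eq hs'
    rw [hκ t ht, hκ r hr, le_div_iff₀ hQ]
    rcases le_total t r with h | h
    · rw [abs_sub_comm]
      exact le_trans (by nlinarith [key t ht r hr h]) (le_abs_self _)
    · exact le_trans (by nlinarith [key r hr t ht h]) (le_abs_self _)
  rw [Metric.continuousOn_iff]
  intro s hs ε hε
  refine ⟨Q * ε ^ 2, by positivity, fun s' hs' h => ?_⟩
  rw [Real.dist_eq] at h ⊢
  refine abs_lt_of_sq_lt_sq ((key2 s' hs' s hs).trans_lt ?_) hε.le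
  rw [div_lt_iff₀ hQ]
  linarith

/-- A primitive of the nonlinearity, with its value along the cubic. -/
lemma exists_primitive {Q : ℝ} (hQ : 0 < Q) {κ : ℝ → ℝ}
    (hκ : ∀ t ∈ Icc (0 : ℝ) 1, κ (Q * (3 * t ^ 2 - 2 * t ^ 3)) = t) :
    ∃ F : ℝ → ℝ, (∀ s ∈ Icc 0 Q, HasDerivAt F (6 * Q * (1 - 2 * κ s)) s) ∧
      ∀ t ∈ Icc (0 : ℝ) 1, 2 * F (Q * (3 * t ^ 2 - 2 * t ^ 3)) = (6 * Q * (t * (1 - t))) ^ 2 := by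
  set k : ℝ → ℝ := IccExtend hQ.le ((Icc 0 Q).domRestrict κ) with hk
  have hkc : Continuous k := (continuousOn_inverse_cubic hQ hκ).domRestrict.Icc_extend'
  have hks : ∀ s ∈ Icc 0 Q, k s = κ s := fun s hs => IccExtend_of_mem _ _ hs
  have hfc : Continuous fun s => 6 * Q * (1 - 2 * k s) := by fun_prop
  refine ⟨fun s => ∫ x in (0 : ℝ)..s, 6 * Q * (1 - 2 * k x), fun s hs => ?_, fun t ht => ?_⟩
  · rw [← hks s hs]
    exact intervalIntegral.integral_hasDerivAt_right (hfc.intervalIntegrable _ _)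
      (hfc.stronglyMeasurableAtFilter _ _) hfc.continuousAt
  · have h := intervalIntegral.integral_comp_mul_deriv (a := 0) (b := t)
      (f := fun t : ℝ => Q * (3 * t ^ 2 - 2 * t ^ 3)) (f' := fun t => 6 * Q * (t * (1 - t)))
      (fun x _ => hasDerivAt_cubic Q x) (by fun_prop) hfc
    have h2 : ∫ x in (0 : ℝ)..t, ((fun s => 6 * Q * (1 - 2 * k s)) ∘
          fun t : ℝ => Q * (3 * t ^ 2 - 2 * t ^ 3)) x * (6 * Q * (x * (1 - x)))
        = ∫ x in (0 : ℝ)..t, 6 * Q * (1 - 2 * x) * (6 * Q * (x * (1 - x))) := by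
      refine intervalIntegral.integral_congr fun x hx => ?_
      rw [uIcc_of_le ht.1] at hx
      have hx1 : x ∈ Icc (0 : ℝ) 1 := ⟨hx.1, hx.2.trans ht.2⟩
      simp only [Function.comp]
      rw [hks _ (cubic_mem_Icc hQ hx1), hκ x hx1]
    have h3 : ∫ x in (0 : ℝ)..t, 6 * Q * (1 - 2 * x) * (6 * Q * (x * (1 - x)))
        = (6 * Q * (t * (1 - t))) ^ 2 / 2 - (6 * Q * (0 * (1 - 0))) ^ 2 / 2 := by
      refine intervalIntegral.integral_eq_sub_of_hasDerivAt
        (f := fun t => (6 * Q * (t * (1 - t))) ^ 2 / 2) (fun x _ => ?_)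
        (Continuous.intervalIntegrable (by fun_prop) _ _)
      have := ((((hasDerivAt_id x).mul ((hasDerivAt_const x (1 : ℝ)).sub (hasDerivAt_id x))).const_mul
        (6 * Q)).pow 2).div_const 2
      refine this.congr_deriv ?_
      simp
      ring
    rw [h2, h3] at h
    norm_num [-intervalIntegral.integral_const_mul] at h
    simp only [← h]
    ring

/-- Travel times strictly below `1` are realised by a positive energy shift, bounded by a constant
as long as the travel time stays away from `0`. -/
lemma exists_energy {A d : ℝ} (hA : 0 < A) (hd : 0 < d) :
    ∃ M : ℝ, ∀ d' : ℝ, d ≤ d' → d' < 1 → ∃ e : ℝ, 0 < e ∧ e ≤ M ∧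
      ∫ t in (0 : ℝ)..1, (√(e + (A * (t * (1 - t))) ^ 2))⁻¹ * (A * (t * (1 - t))) = d' := by
  set G : ℝ → ℝ → ℝ := fun e t => (√(e + (A * (t * (1 - t))) ^ 2))⁻¹ * (A * (t * (1 - t))) with hG
  have hpos : ∀ t ∈ Ioo (0 : ℝ) 1, 0 < A * (t * (1 - t)) := fun t ht =>
    mul_pos hA (mul_pos ht.1 (sub_pos.2 ht.2))
  have hnn : ∀ t ∈ Icc (0 : ℝ) 1, 0 ≤ A * (t * (1 - t)) := fun t ht =>
    mul_nonneg hA.le (mul_nonneg ht.1 (sub_nonneg.2 ht.2))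
  have hae : ∀ᵐ t : ℝ, t ∈ uIoc (0 : ℝ) 1 → t ∈ Ioo (0 : ℝ) 1 := by
    have : ∀ᵐ t : ℝ, t ≠ 1 := by simp [ae_iff]
    filter_upwards [this] with t ht h
    rw [uIoc_of_le zero_le_one] at h
    exact ⟨h.1, lt_of_le_of_ne h.2 ht⟩
  have hcont : ContinuousOn (fun e => ∫ t in (0 : ℝ)..1, G e t) (Ici 0) := by
    intro e he
    refine intervalIntegral.continuousWithinAt_of_dominated_interval (bound := fun _ => 1) ?_ ?_
      (by simp) ?_
    · refine Filter.Eventually.of_forall fun e => Measurable.aestronglyMeasurable ?_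
      simp only [hG]
      fun_prop
    · filter_upwards [self_mem_nhdsWithin] with e he
      refine Filter.Eventually.of_forall fun t ht => ?_
      rw [uIoc_of_le zero_le_one] at ht
      have h0 := hnn t ⟨ht.1.le, ht.2⟩
      simp only [hG]
      rw [Real.norm_of_nonneg (by positivity), inv_mul_eq_div]
      refine div_le_one_of_le₀ ?_ (Real.sqrt_nonneg _)
      exact Real.le_sqrt_of_sq_le (by linarith [mem_Ici.1 he])
    · filter_upwards [hae] with t ht h
      have := hpos t (ht h)
      have he' : 0 ≤ e := he
      have hne : √(e + (A * (t * (1 - t))) ^ 2) ≠ 0 := by positivity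
      refine ContinuousAt.continuousWithinAt ?_
      simp only [hG]
      exact ((by fun_prop : ContinuousAt (fun e => √(e + (A * (t * (1 - t))) ^ 2)) e).inv₀ hne).mul
        continuousAt_const
  have hG0 : ∫ t in (0 : ℝ)..1, G 0 t = 1 := by
    have : ∫ t in (0 : ℝ)..1, G 0 t = ∫ t in (0 : ℝ)..1, (1 : ℝ) := by
      refine intervalIntegral.integral_congr_ae ?_
      filter_upwards [hae] with t ht h
      have := hpos t (ht h)
      simp only [hG, zero_add]
      rw [Real.sqrt_sq this.le, inv_mul_cancel₀ this.ne']
    simp [this]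
  have hGM : ∫ t in (0 : ℝ)..1, G ((A / d) ^ 2) t ≤ d := by
    have h := intervalIntegral.norm_integral_le_of_norm_le_const (a := 0) (b := 1) (C := d)
      (f := G ((A / d) ^ 2)) ?_
    · simpa using (le_abs_self _).trans h
    · intro t ht
      rw [uIoc_of_le zero_le_one] at ht
      have h0 := hnn t ⟨ht.1.le, ht.2⟩
      have h1 : A * (t * (1 - t)) ≤ A := by
        nlinarith [mul_nonneg hA.le (sq_nonneg t), mul_nonneg hA.le (sub_nonneg.2 ht.2)]
      have h2 : A / d ≤ √((A / d) ^ 2 + (A * (t * (1 - t))) ^ 2) :=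
        Real.le_sqrt_of_sq_le (by nlinarith [sq_nonneg (A * (t * (1 - t)))])
      simp only [hG]
      rw [Real.norm_of_nonneg (by positivity), inv_mul_eq_div,
        div_le_iff₀ (lt_of_lt_of_le (by positivity) h2)]
      calc A * (t * (1 - t)) ≤ d * (A / d) := by rw [mul_div_cancel₀ _ hd.ne']; exact h1
        _ ≤ _ := by gcongr
  refine ⟨(A / d) ^ 2, fun d' hdd' hd'1 => ?_⟩
  obtain ⟨e, he, hee⟩ := intermediate_value_Icc' (sq_nonneg (A / d))
    (hcont.mono Icc_subset_Ici_self) (show d' ∈ Icc _ _ from ⟨hGM.trans hdd', by rw [hG0]; exact hd'1.le⟩)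
  refine ⟨e, lt_of_le_of_ne he.1 ?_, he.2, hee⟩
  rintro rfl
  simp only [hG0] at hee
  linarith

/-- The potential `F` and, for each travel time `d' < 1`, the inverse `H` of the one-dimensional
profile crossing `[0, Q]` in time `d'`. -/
lemma exists_profile {Q d : ℝ} (hQ : 0 < Q) (hd : 0 < d) {κ : ℝ → ℝ}
    (hκ : ∀ t ∈ Icc (0 : ℝ) 1, κ (Q * (3 * t ^ 2 - 2 * t ^ 3)) = t) :
    ∃ (F : ℝ → ℝ) (B : ℝ), (∀ s ∈ Icc 0 Q, HasDerivAt F (6 * Q * (1 - 2 * κ s)) s) ∧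
      (∀ s ∈ Icc 0 Q, 0 ≤ F s) ∧
      ∀ d' : ℝ, d ≤ d' → d' < 1 → ∃ (e L : ℝ) (H : ℝ → ℝ), 0 < e ∧ 0 ≤ L ∧
        (∀ s ∈ Icc 0 Q, HasDerivAt H (√(e + 2 * F s))⁻¹ s) ∧
        (∀ s ∈ Icc 0 Q, e + 2 * F s ≤ B) ∧
        ∀ s ∈ Icc 0 Q, 0 ≤ H s ∧ H s ≤ d' ∧ H s ≤ L * s ∧ d' - H s ≤ L * (Q - s) := by
  obtain ⟨F, hF, hFt⟩ := exists_primitive hQ hκ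
  obtain ⟨M, hM⟩ := exists_energy (A := 6 * Q) (by positivity) hd
  have hF0 : ∀ s ∈ Icc 0 Q, 0 ≤ F s := by
    intro s hs
    obtain ⟨t, ht, rfl⟩ := exists_cubic_eq hs
    nlinarith [hFt t ht, sq_nonneg (6 * Q * (t * (1 - t)))]
  have hFc : ContinuousOn F (Icc 0 Q) := fun s hs => (hF s hs).continuousAt.continuousWithinAt
  have hFB : ∀ s ∈ Icc 0 Q, 2 * F s ≤ (6 * Q) ^ 2 := by
    intro s hs
    obtain ⟨t, ht, rfl⟩ := exists_cubic_eq hs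
    rw [hFt t ht]
    have h0 : 0 ≤ t * (1 - t) := mul_nonneg ht.1 (sub_nonneg.2 ht.2)
    have h1 : t * (1 - t) ≤ 1 := by nlinarith [ht.1, ht.2]
    have h2 : 6 * Q * (t * (1 - t)) ≤ 6 * Q := mul_le_of_le_one_right (by positivity) h1
    gcongr
  refine ⟨F, M + (6 * Q) ^ 2, hF, hF0, fun d' hdd' hd'1 => ?_⟩
  obtain ⟨e, he, heM, h_intble⟩ := hM d' hdd' hd'1
  set F' : ℝ → ℝ := IccExtend hQ.le ((Icc 0 Q).domRestrict F) with hF'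
  have hF'c : Continuous F' := hFc.domRestrict.Icc_extend'
  have hF's : ∀ s ∈ Icc 0 Q, F' s = F s := fun s hs => IccExtend_of_mem _ _ hs
  have hF'0 : ∀ s, 0 ≤ F' s := fun s => hF0 _ (projIcc 0 Q hQ.le s).2
  have hpos : ∀ s, 0 < √(e + 2 * F' s) := fun s => by have := hF'0 s; positivity
  have hnc : Continuous fun s => (√(e + 2 * F' s))⁻¹ :=
    Continuous.inv₀ (by fun_prop) fun s => (hpos s).ne'
  have hle : ∀ s, (√(e + 2 * F' s))⁻¹ ≤ (√e)⁻¹ := fun s => by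
    have := hF'0 s
    gcongr
    linarith
  set H : ℝ → ℝ := fun s => ∫ x in (0 : ℝ)..s, (√(e + 2 * F' x))⁻¹ with hH
  have hdiff : ∀ r s, H s - H r = ∫ x in r..s, (√(e + 2 * F' x))⁻¹ := fun r s =>
    intervalIntegral.integral_interval_sub_left (hnc.intervalIntegrable _ _)
      (hnc.intervalIntegrable _ _)
  have hlip : ∀ r s, r ≤ s → 0 ≤ H s - H r ∧ H s - H r ≤ (√e)⁻¹ * (s - r) := by
    intro r s hrs
    rw [hdiff]
    refine ⟨intervalIntegral.integral_nonneg hrs fun x _ => (inv_pos.2 (hpos x)).le, ?_⟩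
    have := intervalIntegral.integral_mono_on hrs (hnc.intervalIntegrable (μ := volume) _ _)
      (continuous_const.intervalIntegrable (μ := volume) r s) fun x _ => hle x
    simpa [mul_comm] using this
  have hH0 : H 0 = 0 := by simp [hH]
  have hHQ : H Q = d' := by
    have h := intervalIntegral.integral_comp_mul_deriv (a := 0) (b := 1)
      (f := fun t : ℝ => Q * (3 * t ^ 2 - 2 * t ^ 3)) (f' := fun t => 6 * Q * (t * (1 - t)))
      (fun x _ => hasDerivAt_cubic Q x) (by fun_prop) hnc
    norm_num at h
    simp only [hH]
    rw [← h_intble, ← h]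
    refine intervalIntegral.integral_congr fun t ht => ?_
    rw [uIcc_of_le zero_le_one] at ht
    rw [hF's _ (cubic_mem_Icc hQ ht), hFt t ht]
  refine ⟨e, (√e)⁻¹, H, he, by positivity, fun s hs => ?_, fun s hs => ?_, fun s hs => ?_⟩
  · rw [← hF's s hs]
    exact intervalIntegral.integral_hasDerivAt_right (hnc.intervalIntegrable _ _)
      (hnc.stronglyMeasurableAtFilter _ _) hnc.continuousAt
  · linarith [hFB s hs]
  · have h1 := hlip 0 s hs.1
    have h2 := hlip s Q hs.2
    rw [hH0, sub_zero, sub_zero] at h1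
    rw [hHQ] at h2
    exact ⟨h1.1, by linarith [h2.1], h1.2, h2.2⟩

/-- A bounded continuous function on the strip vanishes when its energy on rectangles is controlled,
up to arbitrarily small errors, by its mass on the two vertical sides. -/
lemma eq_zero_of_energy_le_sides {p : ℝ × ℝ → ℝ} {d K : ℝ} (hd1 : d ≤ 1) (hK : 0 ≤ K)
    (hp : ContinuousOn p {x : ℝ × ℝ | 0 < x.2 ∧ x.2 < d})
    (hpK : ∀ x : ℝ × ℝ, 0 < x.2 → x.2 < d → |p x| ≤ K)
    (hkey : ∀ a b, a ≤ b → ∀ η > 0, ∀ δ₀ > 0, ∃ δ > 0, δ ≤ δ₀ ∧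
      ∫ x in a..b, ∫ y in δ..d - δ, p (x, y) ^ 2 / 2 ≤
        (∫ y in δ..d - δ, K * |p (a, y)|) + (∫ y in δ..d - δ, K * |p (b, y)|) + η)
    {x : ℝ × ℝ} (hx0 : 0 < x.2) (hxd : x.2 < d) : p x = 0 := by
  have hline : ∀ x, ∀ δ > 0, ContinuousOn (fun y => p (x, y)) (Icc δ (d - δ)) := fun x δ hδ =>
    hp.comp (by fun_prop) fun y hy => ⟨hδ.trans_le hy.1, by have := hy.2; simp only; linarith⟩
  have hii : ∀ x δ, 0 < δ → ∀ u v, δ ≤ u → u ≤ v → v ≤ d - δ →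
      IntervalIntegrable (fun y => p (x, y) ^ 2) volume u v := fun x δ hδ u v hu huv hv =>
    (((hline x δ hδ).mono (Icc_subset_Icc hu hv)).pow 2).intervalIntegrable_of_Icc huv
  have hsq : ∀ x y, 0 < y → y < d → p (x, y) ^ 2 ≤ K ^ 2 := fun x y h0 h1 =>
    sq_le_sq' (neg_le_of_abs_le (hpK (x, y) h0 h1)) (le_of_abs_le (hpK (x, y) h0 h1))
  set I : ℝ → ℝ → ℝ := fun δ x => ∫ y in δ..d - δ, p (x, y) ^ 2 with hI
  have hIc : ∀ δ > 0, δ ≤ d - δ → Continuous (I δ) := by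
    intro δ hδ hδd
    have hc : Continuous fun z : ℝ × ℝ => p (z.1, max δ (min z.2 (d - δ))) ^ 2 := by
      refine (hp.comp_continuous (f := fun z : ℝ × ℝ => (z.1, max δ (min z.2 (d - δ))))
        (by fun_prop) fun z => ⟨hδ.trans_le (le_max_left _ _), ?_⟩).pow 2
      exact lt_of_le_of_lt (max_le hδd (min_le_right _ _)) (by linarith)
    have h := intervalIntegral.continuous_parametric_intervalIntegral_of_continuous' (μ := volume)
      (f := fun x y => p (x, max δ (min y (d - δ))) ^ 2) hc δ (d - δ)
    refine h.congr fun x => ?_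
    refine intervalIntegral.integral_congr fun y hy => ?_
    rw [uIcc_of_le hδd] at hy
    simp only [min_eq_left hy.2, max_eq_right hy.1]
  have hI0 : ∀ δ > 0, δ ≤ d - δ → ∀ x, 0 ≤ I δ x := fun δ _ hδd x =>
    intervalIntegral.integral_nonneg hδd fun y _ => sq_nonneg _
  have hbound : ∀ x δ, 0 < δ → ∀ u v, δ ≤ u → u ≤ v → v ≤ d - δ →
      ∫ y in u..v, p (x, y) ^ 2 ≤ K ^ 2 * (v - u) := by
    intro x δ hδ u v hu huv hv
    have := intervalIntegral.integral_mono_on huv (hii x δ hδ u v hu huv hv)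
      (continuous_const.intervalIntegrable (μ := volume) u v)
      fun y hy => hsq x y (by linarith [hy.1]) (by linarith [hy.2])
    simpa [mul_comm] using this
  have hsplit : ∀ x δ δ₀, 0 < δ → δ ≤ δ₀ → δ₀ ≤ d - δ₀ →
      I δ₀ x ≤ I δ x ∧ I δ x ≤ I δ₀ x + 2 * K ^ 2 * δ₀ := by
    intro x δ δ₀ hδ hδδ hδd
    have h1 : I δ x = (∫ y in δ..δ₀, p (x, y) ^ 2) + I δ₀ x
        + ∫ y in (d - δ₀)..(d - δ), p (x, y) ^ 2 := by
      rw [hI]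
      simp only
      rw [intervalIntegral.integral_add_adjacent_intervals,
        intervalIntegral.integral_add_adjacent_intervals]
      all_goals apply hii x δ hδ <;> linarith
    have h2 := hbound x δ hδ δ δ₀ le_rfl hδδ (by linarith)
    have h3 := hbound x δ hδ (d - δ₀) (d - δ) (by linarith) (by linarith) le_rfl
    have h4 : 0 ≤ ∫ y in δ..δ₀, p (x, y) ^ 2 :=
      intervalIntegral.integral_nonneg hδδ fun y _ => sq_nonneg _
    have h5 : 0 ≤ ∫ y in (d - δ₀)..(d - δ), p (x, y) ^ 2 :=
      intervalIntegral.integral_nonneg (by linarith) fun y _ => sq_nonneg _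
    constructor <;> nlinarith [sq_nonneg K]
  have hImono : ∀ δ δ₀, 0 < δ → δ ≤ δ₀ → δ₀ ≤ d - δ₀ → ∀ a b, a ≤ b →
      ∫ x in a..b, I δ₀ x ≤ ∫ x in a..b, I δ x := fun δ δ₀ hδ hδδ hδd a b hab =>
    intervalIntegral.integral_mono_on hab
      ((hIc δ₀ (hδ.trans_le hδδ) hδd).intervalIntegrable _ _)
      ((hIc δ hδ (by linarith)).intervalIntegrable _ _) fun x _ => (hsplit x δ δ₀ hδ hδδ hδd).1
  -- the mass on a side is controlled by the energy on it, with a free parameter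
  have hside : ∀ x δ δ₀ τ, 0 < τ → 0 < δ → δ ≤ δ₀ → δ₀ ≤ d - δ₀ →
      ∫ y in δ..d - δ, K * |p (x, y)| ≤ K / (2 * τ) * (I δ₀ x + 2 * K ^ 2 * δ₀) + K * τ / 2 := by
    intro x δ δ₀ τ hτ hδ hδδ hδd
    have hδ' : δ ≤ d - δ := by linarith
    have h1 : ∫ y in δ..d - δ, K * |p (x, y)| ≤
        ∫ y in δ..d - δ, (K / (2 * τ) * p (x, y) ^ 2 + K * τ / 2) := by
      refine intervalIntegral.integral_mono_on hδ'
        ((continuousOn_const.mul (hline x δ hδ).abs).intervalIntegrable_of_Icc hδ')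
        (((hii x δ hδ _ _ le_rfl hδ' le_rfl).const_mul _).add
          (continuous_const.intervalIntegrable _ _)) fun y _ => ?_
      have : K / (2 * τ) * p (x, y) ^ 2 + K * τ / 2 - K * |p (x, y)|
          = K / (2 * τ) * (|p (x, y)| - τ) ^ 2 := by
        rw [← sq_abs]
        field_simp
        ring
      have h : 0 ≤ K / (2 * τ) * (|p (x, y)| - τ) ^ 2 := by positivity
      linarith
    rw [intervalIntegral.integral_add ((hii x δ hδ _ _ le_rfl hδ' le_rfl).const_mul _)
      (continuous_const.intervalIntegrable _ _), intervalIntegral.integral_const_mul (K / (2 * τ)),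
      intervalIntegral.integral_const, smul_eq_mul] at h1
    have h2 : K / (2 * τ) * I δ x ≤ K / (2 * τ) * (I δ₀ x + 2 * K ^ 2 * δ₀) :=
      mul_le_mul_of_nonneg_left (hsplit x δ δ₀ hδ hδδ hδd).2 (by positivity)
    have h3 : (d - δ - δ) * (K * τ / 2) ≤ 1 * (K * τ / 2) :=
      mul_le_mul_of_nonneg_right (by linarith) (by positivity)
    simp only [hI] at h2 ⊢
    linarith
  have hstep : ∀ δ₀ τ, 0 < τ → 0 < δ₀ → δ₀ ≤ d - δ₀ → ∀ a b, a ≤ b →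
      (∫ x in a..b, I δ₀ x) / 2 ≤
        K / (2 * τ) * (I δ₀ a + I δ₀ b + 4 * K ^ 2 * δ₀) + K * τ := by
    intro δ₀ τ hτ hδ₀ hδd a b hab
    refine le_of_forall_pos_le_add fun η hη => ?_
    obtain ⟨δ, hδ, hδδ, h⟩ := hkey a b hab η hη δ₀ hδ₀
    have h1 := hside a δ δ₀ τ hτ hδ hδδ hδd
    have h2 := hside b δ δ₀ τ hτ hδ hδδ hδd
    have h3 := hImono δ δ₀ hδ hδδ hδd a b hab
    have h4 : ∫ x in a..b, ∫ y in δ..d - δ, p (x, y) ^ 2 / 2 = (∫ x in a..b, I δ x) / 2 := by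
      simp only [hI, intervalIntegral.integral_div]
    rw [h4] at h
    linarith
  have hIK : ∀ δ > 0, δ ≤ d - δ → ∀ x, I δ x ≤ K ^ 2 := fun δ hδ hδd x =>
    (hbound x δ hδ δ (d - δ) le_rfl hδd le_rfl).trans
      (mul_le_of_le_one_right (sq_nonneg K) (by linarith))
  obtain ⟨C, hC0, hC⟩ : ∃ C, 0 ≤ C ∧ ∀ δ > 0, δ ≤ d - δ → ∀ a b, a ≤ b →
      ∫ x in a..b, I δ x ≤ C := by
    refine ⟨6 * K ^ 3 + 2 * K, by positivity, fun δ hδ hδd a b hab => ?_⟩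
    have h1 := hstep δ 1 one_pos hδ hδd a b hab
    have h2 : K / (2 * 1) * (I δ a + I δ b + 4 * K ^ 2 * δ) ≤ K / (2 * 1) * (6 * K ^ 2) := by
      refine mul_le_mul_of_nonneg_left ?_ (by positivity)
      nlinarith [hIK δ hδ hδd a, hIK δ hδ hδd b, sq_nonneg K]
    nlinarith
  have hslice : ∀ δ > 0, δ ≤ d - δ → ∀ c L, 0 < L → ∃ x ∈ Icc c (c + L), I δ x ≤ (C + 1) / L := by
    intro δ hδ hδd c L hL
    by_contra! hcon
    have h := intervalIntegral.integral_mono_on (by linarith : c ≤ c + L)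
      (continuous_const.intervalIntegrable (μ := volume) c (c + L))
      ((hIc δ hδ hδd).intervalIntegrable c (c + L)) fun x hx => (hcon x hx).le
    rw [intervalIntegral.integral_const, smul_eq_mul, add_sub_cancel_left,
      mul_div_cancel₀ _ hL.ne'] at h
    linarith [hC δ hδ hδd c (c + L) (by linarith)]
  have hsmall : ∀ δ > 0, δ ≤ d - δ → ∀ R, 0 ≤ R → ∫ x in (-R)..R, I δ x ≤ 0 := by
    intro δ hδ hδd R hR
    set D := 2 * (K * (C + 1) + 2 * K ^ 3 + K) with hD
    have hDσ : ∀ σ > 0, ∫ x in (-R)..R, I δ x ≤ D * σ := by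
      intro σ hσ
      set δ' := min δ (σ ^ 2) with hδ'
      have hδ'0 : 0 < δ' := lt_min hδ (by positivity)
      have hδ'δ : δ' ≤ δ := min_le_left _ _
      have hδ'd : δ' ≤ d - δ' := by linarith
      have hL : 0 < 1 / σ ^ 2 := by positivity
      obtain ⟨b, hb, hIb⟩ := hslice δ' hδ'0 hδ'd R _ hL
      obtain ⟨a, ha, hIa⟩ := hslice δ' hδ'0 hδ'd (-R - 1 / σ ^ 2) _ hL
      rw [sub_add_cancel] at ha
      have h1 := hImono δ' δ hδ'0 hδ'δ hδd (-R) R (by linarith)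
      have h2 : ∫ x in (-R)..R, I δ' x ≤ ∫ x in a..b, I δ' x :=
        intervalIntegral.integral_mono_interval ha.2 (by linarith) hb.1
          (Filter.Eventually.of_forall fun x => hI0 δ' hδ'0 hδ'd x)
          ((hIc δ' hδ'0 hδ'd).intervalIntegrable _ _)
      have h3 := hstep δ' σ hσ hδ'0 hδ'd a b (by linarith [ha.2, hb.1])
      have h4 : (C + 1) / (1 / σ ^ 2) = (C + 1) * σ ^ 2 := by field_simp
      rw [h4] at hIa hIb
      have h5 : I δ' a + I δ' b + 4 * K ^ 2 * δ' ≤ 2 * (C + 1) * σ ^ 2 + 4 * K ^ 2 * σ ^ 2 := by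
        nlinarith [min_le_right δ (σ ^ 2), sq_nonneg K]
      have h6 : K / (2 * σ) * (I δ' a + I δ' b + 4 * K ^ 2 * δ') ≤
          K / (2 * σ) * (2 * (C + 1) * σ ^ 2 + 4 * K ^ 2 * σ ^ 2) :=
        mul_le_mul_of_nonneg_left h5 (by positivity)
      have h7 : K / (2 * σ) * (2 * (C + 1) * σ ^ 2 + 4 * K ^ 2 * σ ^ 2)
          = (K * (C + 1) + 2 * K ^ 3) * σ := by
        field_simp
        ring
      rw [hD]
      linarith
    have hD0 : 0 ≤ D := by positivity
    refine le_of_forall_pos_le_add fun η hη => ?_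
    refine (hDσ (η / (D + 1)) (by positivity)).trans ?_
    rw [zero_add, ← mul_div_assoc, div_le_iff₀ (by positivity)]
    nlinarith
  by_contra hne
  obtain ⟨x₁, y⟩ := x
  simp only at hx0 hxd
  set δ := min y (d - y) / 2 with hδ
  have hm1 := min_le_left y (d - y)
  have hm2 := min_le_right y (d - y)
  have hm0 : 0 < min y (d - y) := lt_min hx0 (by linarith)
  have hδ0 : 0 < δ := by positivity
  have hδd : δ < d - δ := by linarith
  have hpos : 0 < I δ x₁ :=
    intervalIntegral.integral_pos hδd ((hline x₁ δ hδ0).pow 2) (fun y _ => sq_nonneg _)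
      ⟨y, ⟨by linarith, by linarith⟩, by positivity⟩
  have hR : -(|x₁| + 1) < |x₁| + 1 := by linarith [abs_nonneg x₁]
  have := intervalIntegral.integral_pos hR (hIc δ hδ0 hδd.le).continuousOn
    (fun x _ => hI0 δ hδ0 hδd.le x)
    ⟨x₁, ⟨by linarith [neg_abs_le x₁], by linarith [le_abs_self x₁]⟩, hpos⟩
  linarith [hsmall δ hδ0 hδd.le (|x₁| + 1) (by positivity)]

lemma differentiableAt_fderiv {ψ : ℝ × ℝ → ℝ} {x : ℝ × ℝ} (h : ContDiffAt ℝ 2 ψ x) :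
    DifferentiableAt ℝ (fderiv ℝ ψ) x :=
  (h.fderiv_right (m := 1) (by norm_num)).differentiableAt (by norm_num)

lemma differentiableAt_pd1 {ψ : ℝ × ℝ → ℝ} {x : ℝ × ℝ} (h : ContDiffAt ℝ 2 ψ x) :
    DifferentiableAt ℝ (pd1 ψ) x :=
  (differentiableAt_fderiv h).clm_apply (differentiableAt_const _)

lemma differentiableAt_pd2 {ψ : ℝ × ℝ → ℝ} {x : ℝ × ℝ} (h : ContDiffAt ℝ 2 ψ x) :
    DifferentiableAt ℝ (pd2 ψ) x :=
  (differentiableAt_fderiv h).clm_apply (differentiableAt_const _)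

lemma pd2_pd1_eq_pd1_pd2 {ψ : ℝ × ℝ → ℝ} {x : ℝ × ℝ} (h : ContDiffAt ℝ 2 ψ x) :
    pd2 (pd1 ψ) x = pd1 (pd2 ψ) x := by
  have hd := differentiableAt_fderiv h
  have hs : IsSymmSndFDerivAt ℝ ψ x := h.isSymmSndFDerivAt (by simp)
  have h1 := (hd.hasFDerivAt.clm_apply (hasFDerivAt_const ((1, 0) : ℝ × ℝ) x)).fderiv
  have h2 := (hd.hasFDerivAt.clm_apply (hasFDerivAt_const ((0, 1) : ℝ × ℝ) x)).fderiv
  change fderiv ℝ (fun y => fderiv ℝ ψ y (1, 0)) x (0, 1) =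
    fderiv ℝ (fun y => fderiv ℝ ψ y (0, 1)) x (1, 0)
  rw [h1, h2]
  simpa using hs.eq (0, 1) (1, 0)

/-- First component of the vertical stress-energy flux of `ψ`, weighted by `H(ψ) - x₂`. -/
def flux1 (ψ : ℝ × ℝ → ℝ) (H : ℝ → ℝ) (x : ℝ × ℝ) : ℝ :=
  (H (ψ x) - x.2) * -(pd1 ψ x * pd2 ψ x)

/-- Second component of the vertical stress-energy flux of `ψ`, weighted by `H(ψ) - x₂`. -/
def flux2 (ψ : ℝ × ℝ → ℝ) (F H : ℝ → ℝ) (e : ℝ) (x : ℝ × ℝ) : ℝ :=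
  (H (ψ x) - x.2) * ((pd1 ψ x * pd1 ψ x - pd2 ψ x * pd2 ψ x) / 2 + (e / 2 + F (ψ x)))

/-- The divergence of the weighted flux has a sign when `H` inverts a one-dimensional profile. -/
lemma hasFDerivAt_flux {ψ : ℝ × ℝ → ℝ} {F H : ℝ → ℝ} {e c : ℝ} {x : ℝ × ℝ}
    (h : ContDiffAt ℝ 2 ψ x) (hF : HasDerivAt F c (ψ x)) (hlap : lap ψ x = c)
    (hpos : 0 < e + 2 * F (ψ x)) (hH : HasDerivAt H (√(e + 2 * F (ψ x)))⁻¹ (ψ x)) :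
    DifferentiableAt ℝ (flux1 ψ H) x ∧ DifferentiableAt ℝ (flux2 ψ F H e) x ∧
      fderiv ℝ (flux1 ψ H) x (1, 0) + fderiv ℝ (flux2 ψ F H e) x (0, 1) =
        -((1 + pd2 ψ x * (√(e + 2 * F (ψ x)))⁻¹) / 2 *
          (pd1 ψ x ^ 2 + (√(e + 2 * F (ψ x)) - pd2 ψ x) ^ 2)) := by
  have hψ : HasFDerivAt ψ (fderiv ℝ ψ x) x := (h.differentiableAt (by norm_num)).hasFDerivAt
  have h1 := (differentiableAt_pd1 h).hasFDerivAt
  have h2 := (differentiableAt_pd2 h).hasFDerivAt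
  have hη : HasFDerivAt (fun x : ℝ × ℝ => H (ψ x) - x.2) _ x :=
    (hH.comp_hasFDerivAt x hψ).sub (hasFDerivAt_snd (𝕜 := ℝ) (p := x))
  have hf1 : HasFDerivAt (flux1 ψ H) _ x := hη.mul (h1.mul h2).neg
  have hf2 : HasFDerivAt (flux2 ψ F H e) _ x :=
    hη.mul ((((h1.mul h1).sub (h2.mul h2)).mul_const (1 / 2 : ℝ)).add
      ((hF.comp_hasFDerivAt x hψ).const_add (e / 2))) |>.congr_of_eventuallyEq
        (Filter.Eventually.of_forall fun y => by simp [flux2, div_eq_mul_inv])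
  refine ⟨hf1.differentiableAt, hf2.differentiableAt, ?_⟩
  have hsymm := pd2_pd1_eq_pd1_pd2 h
  rw [hf1.fderiv, hf2.fderiv]
  simp only [lap] at hlap
  set N := √(e + 2 * F (ψ x)) with hN
  have hN0 : 0 < N := Real.sqrt_pos.2 hpos
  have hN2 : F (ψ x) = (N ^ 2 - e) / 2 := by rw [hN, Real.sq_sqrt hpos.le]; ring
  have e1 : fderiv ℝ ψ x (1, 0) = pd1 ψ x := rfl
  have e2 : fderiv ℝ ψ x (0, 1) = pd2 ψ x := rfl
  have e3 : fderiv ℝ (pd1 ψ) x (1, 0) = pd1 (pd1 ψ) x := rfl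
  have e4 : fderiv ℝ (pd1 ψ) x (0, 1) = pd2 (pd1 ψ) x := rfl
  have e5 : fderiv ℝ (pd2 ψ) x (1, 0) = pd1 (pd2 ψ) x := rfl
  have e6 : fderiv ℝ (pd2 ψ) x (0, 1) = pd2 (pd2 ψ) x := rfl
  simp [e1, e2, e3, e4, e5, e6, hsymm, ← hlap, hN2]
  field_simp
  ring

/-- Energy estimate on the rectangle `[a, b] × [δ, d - δ]`. -/
lemma energy_le_sides {ψ : ℝ × ℝ → ℝ} {F H f : ℝ → ℝ} {Q d e K B c δ a b : ℝ}
    (hC2 : ∀ x : ℝ × ℝ, 0 < x.2 → x.2 < d → ContDiffAt ℝ 2 ψ x)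
    (hbd : ∀ x : ℝ × ℝ, 0 < x.2 → x.2 < d → ψ x ∈ Icc 0 Q)
    (heq : ∀ x : ℝ × ℝ, 0 < x.2 → x.2 < d → lap ψ x = f (ψ x))
    (hmono : ∀ x : ℝ × ℝ, 0 < x.2 → x.2 < d → 0 ≤ pd2 ψ x)
    (hK1 : ∀ x : ℝ × ℝ, 0 < x.2 → x.2 < d → |pd1 ψ x| ≤ K)
    (hK2 : ∀ x : ℝ × ℝ, 0 < x.2 → x.2 < d → |pd2 ψ x| ≤ K)
    (he : 0 < e) (hF : ∀ s ∈ Icc 0 Q, HasDerivAt F (f s) s) (hF0 : ∀ s ∈ Icc 0 Q, 0 ≤ F s)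
    (hFB : ∀ s ∈ Icc 0 Q, e + 2 * F s ≤ B)
    (hH : ∀ s ∈ Icc 0 Q, HasDerivAt H (√(e + 2 * F s))⁻¹ s)
    (hη1 : ∀ x : ℝ × ℝ, 0 < x.2 → x.2 < d → |H (ψ x) - x.2| ≤ 1)
    (hδ : 0 < δ) (hδd : δ ≤ d - δ) (hab : a ≤ b)
    (hbot : ∀ x₁, |H (ψ (x₁, δ)) - δ| ≤ c) (htop : ∀ x₁, |H (ψ (x₁, d - δ)) - (d - δ)| ≤ c) :
    ∫ x in a..b, ∫ y in δ..d - δ, pd1 ψ (x, y) ^ 2 / 2 ≤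
      (∫ y in δ..d - δ, K * |pd1 ψ (a, y)|) + (∫ y in δ..d - δ, K * |pd1 ψ (b, y)|)
        + 2 * (c * (K ^ 2 + B)) * (b - a) := by
  have hpos : ∀ s ∈ Icc 0 Q, 0 < e + 2 * F s := fun s hs => by linarith [hF0 s hs]
  have hd : ∀ x : ℝ × ℝ, 0 < x.2 → x.2 < d → _ := fun x h0 h1 =>
    hasFDerivAt_flux (hC2 x h0 h1) (hF _ (hbd x h0 h1)) (heq x h0 h1) (hpos _ (hbd x h0 h1))
      (hH _ (hbd x h0 h1))
  have hsub : ∀ x ∈ Icc (a, δ) (b, d - δ), 0 < x.2 ∧ x.2 < d := fun x hx =>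
    ⟨hδ.trans_le hx.1.2, lt_of_le_of_lt hx.2.2 (by simp only; linarith)⟩
  have c1 : ContinuousOn (pd1 ψ) (Icc (a, δ) (b, d - δ)) := fun x hx =>
    (differentiableAt_pd1 (hC2 x (hsub x hx).1 (hsub x hx).2)).continuousAt.continuousWithinAt
  have c2 : ContinuousOn (pd2 ψ) (Icc (a, δ) (b, d - δ)) := fun x hx =>
    (differentiableAt_pd2 (hC2 x (hsub x hx).1 (hsub x hx).2)).continuousAt.continuousWithinAt
  have c3 : ContinuousOn (fun x => √(e + 2 * F (ψ x))) (Icc (a, δ) (b, d - δ)) := fun x hx => by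
    have hx' := hsub x hx
    have hc : ContinuousAt ψ x :=
      ((hC2 x hx'.1 hx'.2).differentiableAt (by norm_num)).continuousAt
    have hFc : ContinuousAt (fun x => F (ψ x)) x :=
      ContinuousAt.comp (hF _ (hbd x hx'.1 hx'.2)).continuousAt hc
    exact ((continuousAt_const.add (continuousAt_const.mul hFc)).sqrt).continuousWithinAt
  have c4 : ContinuousOn (fun x => -((1 + pd2 ψ x * (√(e + 2 * F (ψ x)))⁻¹) / 2 *
      (pd1 ψ x ^ 2 + (√(e + 2 * F (ψ x)) - pd2 ψ x) ^ 2))) (Icc (a, δ) (b, d - δ)) := by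
    have c3' := c3.inv₀ fun x hx =>
      (Real.sqrt_pos.2 (hpos _ (hbd x (hsub x hx).1 (hsub x hx).2))).ne'
    exact ((((continuousOn_const.add (c2.mul c3')).div_const 2).mul
      ((c1.pow 2).add ((c3.sub c2).pow 2)))).neg
  have c5 : ContinuousOn (fun x => fderiv ℝ (flux1 ψ H) x (1, 0) +
      fderiv ℝ (flux2 ψ F H e) x (0, 1)) (Icc (a, δ) (b, d - δ)) :=
    c4.congr fun x hx => (hd x (hsub x hx).1 (hsub x hx).2).2.2
  have f1c : ContinuousOn (flux1 ψ H) (Icc (a, δ) (b, d - δ)) := fun x hx =>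
    (hd x (hsub x hx).1 (hsub x hx).2).1.continuousAt.continuousWithinAt
  have f2c : ContinuousOn (flux2 ψ F H e) (Icc (a, δ) (b, d - δ)) := fun x hx =>
    (hd x (hsub x hx).1 (hsub x hx).2).2.1.continuousAt.continuousWithinAt
  have hioo : ∀ x ∈ Ioo a b ×ˢ Ioo δ (d - δ), 0 < x.2 ∧ x.2 < d := fun x hx =>
    ⟨hδ.trans hx.2.1, by linarith [hx.2.2]⟩
  have hdiv := integral_divergence_prod_Icc_of_hasFDerivAt_of_le (flux1 ψ H) (flux2 ψ F H e)
    (fderiv ℝ (flux1 ψ H)) (fderiv ℝ (flux2 ψ F H e)) (a, δ) (b, d - δ) ⟨hab, hδd⟩ f1c f2c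
    (fun x hx => (hd x (hioo x hx).1 (hioo x hx).2).1.hasFDerivAt)
    (fun x hx => (hd x (hioo x hx).1 (hioo x hx).2).2.1.hasFDerivAt)
    (c5.integrableOn_compact isCompact_Icc)
  simp only at hdiv
  have hener : ∫ x in Icc (a, δ) (b, d - δ), pd1 ψ x ^ 2 / 2 ≤
      -∫ x in Icc (a, δ) (b, d - δ), (fderiv ℝ (flux1 ψ H) x (1, 0) +
        fderiv ℝ (flux2 ψ F H e) x (0, 1)) := by
    rw [← integral_neg]
    refine setIntegral_mono_on (((c1.pow 2).div_const 2).integrableOn_compact isCompact_Icc)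
      (c5.integrableOn_compact isCompact_Icc).neg measurableSet_Icc fun x hx => ?_
    obtain ⟨h0, h1⟩ := hsub x hx
    rw [(hd x h0 h1).2.2, neg_neg]
    have hv : 0 ≤ pd2 ψ x * (√(e + 2 * F (ψ x)))⁻¹ := mul_nonneg (hmono x h0 h1) (by positivity)
    nlinarith [sq_nonneg (pd1 ψ x), sq_nonneg (√(e + 2 * F (ψ x)) - pd2 ψ x),
      mul_nonneg hv (sq_nonneg (pd1 ψ x)),
      mul_nonneg hv (sq_nonneg (√(e + 2 * F (ψ x)) - pd2 ψ x))]
  have hfub : ∫ x in Icc (a, δ) (b, d - δ), pd1 ψ x ^ 2 / 2 =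
      ∫ x in a..b, ∫ y in δ..d - δ, pd1 ψ (x, y) ^ 2 / 2 := by
    have h_intble : IntegrableOn (fun x => pd1 ψ x ^ 2 / 2) (Icc (a, δ) (b, d - δ)) :=
      ((c1.pow 2).div_const 2).integrableOn_compact isCompact_Icc
    rw [Icc_prod_eq] at h_intble ⊢
    rw [Measure.volume_eq_prod] at h_intble ⊢
    rw [setIntegral_prod _ h_intble, integral_Icc_eq_integral_Ioc,
      intervalIntegral.integral_of_le hab]
    simp only [integral_Icc_eq_integral_Ioc, intervalIntegral.integral_of_le hδd]
  have hside : ∀ x₁ ∈ Icc a b, |∫ y in δ..d - δ, flux1 ψ H (x₁, y)| ≤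
      ∫ y in δ..d - δ, K * |pd1 ψ (x₁, y)| := by
    intro x₁ hx₁
    have hline : MapsTo (fun y => (x₁, y)) (Icc δ (d - δ)) (Icc (a, δ) (b, d - δ)) :=
      fun y hy => ⟨⟨hx₁.1, hy.1⟩, hx₁.2, hy.2⟩
    rw [← Real.norm_eq_abs]
    refine intervalIntegral.norm_integral_le_of_norm_le hδd
      (Filter.Eventually.of_forall fun y hy => ?_) ?_
    · obtain ⟨h0, h1⟩ := hsub _ (hline (Ioc_subset_Icc_self hy))
      have h2 := hη1 _ h0 h1
      have h3 := hK2 _ h0 h1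
      rw [flux1, Real.norm_eq_abs, abs_mul, abs_neg, abs_mul]
      calc |H (ψ (x₁, y)) - (x₁, y).2| * (|pd1 ψ (x₁, y)| * |pd2 ψ (x₁, y)|)
          ≤ 1 * (|pd1 ψ (x₁, y)| * K) := by gcongr
        _ = K * |pd1 ψ (x₁, y)| := by ring
    · exact ((continuousOn_const.mul ((c1.comp (by fun_prop) hline).abs))).intervalIntegrable_of_Icc
        hδd
  have hflux2 : ∀ x : ℝ × ℝ, 0 < x.2 → x.2 < d → |H (ψ x) - x.2| ≤ c →
      ‖flux2 ψ F H e x‖ ≤ c * (K ^ 2 + B) := by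
    intro x h0 h1 hc
    rw [flux2, Real.norm_eq_abs, abs_mul]
    have hs := hbd x h0 h1
    have h2 : pd1 ψ x * pd1 ψ x ≤ K ^ 2 := by
      rw [← sq]; exact sq_le_sq' (neg_le_of_abs_le (hK1 x h0 h1)) (le_of_abs_le (hK1 x h0 h1))
    have h3 : pd2 ψ x * pd2 ψ x ≤ K ^ 2 := by
      rw [← sq]; exact sq_le_sq' (neg_le_of_abs_le (hK2 x h0 h1)) (le_of_abs_le (hK2 x h0 h1))
    have h4 := hFB _ hs
    have h5 := hpos _ hs
    refine mul_le_mul hc (abs_le.2 ⟨?_, ?_⟩) (abs_nonneg _) ((abs_nonneg _).trans hc) <;>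
      nlinarith [mul_self_nonneg (pd1 ψ x), mul_self_nonneg (pd2 ψ x)]
  have hB := intervalIntegral.norm_integral_le_of_norm_le_const (a := a) (b := b)
    fun x₁ _ => hflux2 (x₁, δ) hδ (by simp only; linarith) (hbot x₁)
  have hT := intervalIntegral.norm_integral_le_of_norm_le_const (a := a) (b := b)
    fun x₁ _ => hflux2 (x₁, d - δ) (by simp only; linarith) (by simp only; linarith) (htop x₁)
  rw [Real.norm_eq_abs, abs_of_nonneg (sub_nonneg.2 hab)] at hB hT
  have h1 := abs_le.1 (hside a ⟨le_rfl, hab⟩)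
  have h2 := abs_le.1 (hside b ⟨hab, le_rfl⟩)
  have h3 := abs_le.1 hB
  have h4 := abs_le.1 hT
  rw [← hfub]
  linarith [h1.2, h2.1, h3.2, h4.1]

/-- Liouville type theorem in the strip `Ω̂^d = ℝ × (0,d)`: a solution `ψ` of
`Δψ = f(ψ)` with `ψ = 0` on the bottom, `ψ = Q` on the top, `0 ≤ ψ ≤ Q`,
`∂_{x₂}ψ ≥ 0`, `ψ ∈ C²(Ω̂^d)` and Lipschitz on the closure, depends only on `x₂`. -/
theorem stmt16
    (Q : ℝ) (hQ : 0 < Q)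
    (κ : ℝ → ℝ) (hκ : ∀ t ∈ Set.Icc (0 : ℝ) 1, κ (Q * (3 * t ^ 2 - 2 * t ^ 3)) = t)
    (f : ℝ → ℝ) (hf : ∀ s : ℝ, f s = 6 * Q * (1 - 2 * κ s))
    (d : ℝ) (hd : d ∈ Set.Ioc (0 : ℝ) 1)
    (Ωd : Set (ℝ × ℝ)) (hΩd : Ωd = {x : ℝ × ℝ | 0 < x.2 ∧ x.2 < d})
    (ψ : ℝ × ℝ → ℝ)
    (hC2 : ContDiffOn ℝ 2 ψ Ωd)
    (hLip : ∃ K, LipschitzOnWith K ψ (closure Ωd))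
    (hbd : ∀ x ∈ Ωd, 0 ≤ ψ x ∧ ψ x ≤ Q)
    (heq : ∀ x ∈ Ωd, lap ψ x = f (ψ x))
    (hbot : ∀ x₁ : ℝ, ψ (x₁, 0) = 0)
    (htop : ∀ x₁ : ℝ, ψ (x₁, d) = Q)
    (hmono : ∀ x ∈ Ωd, 0 ≤ pd2 ψ x) :
    ∃ g : ℝ → ℝ, ∀ x ∈ Ωd, ψ x = g x.2 := by
  obtain ⟨hd0, hd1⟩ := hd
  obtain ⟨K, hLip⟩ := hLip
  subst hΩd
  set S : Set (ℝ × ℝ) := {x | 0 < x.2 ∧ x.2 < d} with hS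
  have hSo : IsOpen S :=
    (isOpen_lt continuous_const continuous_snd).inter (isOpen_lt continuous_snd continuous_const)
  have hcl : ∀ x y : ℝ, y ∈ Icc 0 d → (x, y) ∈ closure S := by
    intro x y hy
    have h : S = univ ×ˢ Ioo 0 d := by
      ext z
      simp [hS]
    rw [h, closure_prod_eq, closure_univ, closure_Ioo hd0.ne]
    exact ⟨mem_univ _, hy⟩
  have hC2' : ∀ x : ℝ × ℝ, 0 < x.2 → x.2 < d → ContDiffAt ℝ 2 ψ x := fun x h0 h1 =>
    hC2.contDiffAt (hSo.mem_nhds ⟨h0, h1⟩)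
  have hfd : ∀ x : ℝ × ℝ, 0 < x.2 → x.2 < d → ‖fderiv ℝ ψ x‖ ≤ K := fun x h0 h1 =>
    norm_fderiv_le_of_lipschitzOn ℝ (hSo.mem_nhds ⟨h0, h1⟩) (hLip.mono subset_closure)
  have hK1 : ∀ x : ℝ × ℝ, 0 < x.2 → x.2 < d → |pd1 ψ x| ≤ K := fun x h0 h1 => by
    simpa [pd1] using (fderiv ℝ ψ x).le_of_opNorm_le (hfd x h0 h1) (1, 0)
  have hK2 : ∀ x : ℝ × ℝ, 0 < x.2 → x.2 < d → |pd2 ψ x| ≤ K := fun x h0 h1 => by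
    simpa [pd2] using (fderiv ℝ ψ x).le_of_opNorm_le (hfd x h0 h1) (0, 1)
  have hlip : ∀ x₁, ∀ y ∈ Icc 0 d, ∀ z ∈ Icc 0 d, |ψ (x₁, y) - ψ (x₁, z)| ≤ K * |y - z| := by
    intro x₁ y hy z hz
    have h := hLip.dist_le_mul _ (hcl x₁ y hy) _ (hcl x₁ z hz)
    simpa [Prod.dist_eq, Real.dist_eq] using h
  obtain ⟨F, B, hF, hF0, hprof⟩ := exists_profile hQ (half_pos hd0) hκ
  have hzero : ∀ x : ℝ × ℝ, 0 < x.2 → x.2 < d → pd1 ψ x = 0 := by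
    refine fun x h0 h1 => eq_zero_of_energy_le_sides hd1 K.coe_nonneg (fun x hx =>
      (differentiableAt_pd1 (hC2' x hx.1 hx.2)).continuousAt.continuousWithinAt) hK1 ?_ h0 h1
    intro a b hab η hη δ₀ hδ₀
    set W : ℝ := |2 * ((K : ℝ) ^ 2 + B) * (b - a)| + 1 with hW
    have hW0 : 0 < W := by positivity
    set ε : ℝ := min (d / 2) (η / (2 * W)) with hε
    have hε0 : 0 < ε := lt_min (by positivity) (by positivity)
    have hε1 : ε ≤ d / 2 := min_le_left _ _
    have hε2 : ε ≤ η / (2 * W) := min_le_right _ _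
    obtain ⟨e, L, H, he, hL, hH, hFB, hHb⟩ := hprof (d - ε) (by linarith) (by linarith)
    have hLK : 0 < L * K + 1 := by positivity
    set δ : ℝ := min δ₀ (min (d / 2) (η / (2 * W) / (L * K + 1))) with hδ
    have hδ0 : 0 < δ := lt_min hδ₀ (lt_min (by positivity) (by positivity))
    have hδ2 : δ ≤ d / 2 := (min_le_right _ _).trans (min_le_left _ _)
    have hδ3 : (L * K + 1) * δ ≤ η / (2 * W) := by
      have : δ ≤ η / (2 * W) / (L * K + 1) := (min_le_right _ _).trans (min_le_right _ _)
      rwa [le_div_iff₀ hLK, mul_comm] at this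
    have hsum : η / (2 * W) + η / (2 * W) = η / W := by
      field_simp
      ring
    have hLKδ : 0 ≤ L * K * δ := by positivity
    refine ⟨δ, hδ0, min_le_left _ _, (energy_le_sides (c := η / W) hC2'
      (fun x h0 h1 => hbd x ⟨h0, h1⟩) (fun x h0 h1 => (heq x ⟨h0, h1⟩).trans (hf _))
      (fun x h0 h1 => hmono x ⟨h0, h1⟩) hK1 hK2 he hF hF0 hFB hH ?_ hδ0 (by linarith) hab
      ?_ ?_).trans ?_⟩
    · intro x h0 h1
      obtain ⟨h2, h3, -⟩ := hHb _ (hbd x ⟨h0, h1⟩)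
      exact abs_le.2 ⟨by linarith, by linarith⟩
    · intro x₁
      obtain ⟨h2, -, h3, -⟩ := hHb _ (hbd (x₁, δ) ⟨hδ0, by simp only; linarith⟩)
      have h4 := le_of_abs_le (hlip x₁ δ ⟨hδ0.le, by linarith⟩ 0 ⟨le_rfl, hd0.le⟩)
      rw [hbot, sub_zero, sub_zero, abs_of_pos hδ0] at h4
      have h5 := mul_le_mul_of_nonneg_left h4 hL
      exact abs_le.2 ⟨by linarith, by linarith⟩
    · intro x₁
      obtain ⟨-, h2, -, h3⟩ := hHb _ (hbd (x₁, d - δ)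
        ⟨by simp only; linarith, by simp only; linarith⟩)
      have h4 := le_of_abs_le (hlip x₁ d ⟨hd0.le, le_rfl⟩ (d - δ) ⟨by linarith, by linarith⟩)
      rw [htop, sub_sub_cancel, abs_of_pos hδ0] at h4
      have h5 := mul_le_mul_of_nonneg_left h4 hL
      exact abs_le.2 ⟨by linarith, by linarith⟩
    · have h1 : 2 * (η / W * ((K : ℝ) ^ 2 + B)) * (b - a) ≤ η := by
        have h2 : 2 * (η / W * ((K : ℝ) ^ 2 + B)) * (b - a)
            = η / W * (2 * ((K : ℝ) ^ 2 + B) * (b - a)) := by ring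
        have h3 : 2 * ((K : ℝ) ^ 2 + B) * (b - a) ≤ W := by
          rw [hW]
          linarith [le_abs_self (2 * ((K : ℝ) ^ 2 + B) * (b - a))]
        rw [h2]
        calc η / W * (2 * ((K : ℝ) ^ 2 + B) * (b - a)) ≤ η / W * W := by gcongr
          _ = η := div_mul_cancel₀ _ hW0.ne'
      exact add_le_add le_rfl h1
  refine ⟨fun y => ψ (0, y), fun x hx => ?_⟩
  obtain ⟨x₁, y⟩ := x
  have hder : ∀ t : ℝ, HasDerivAt (fun t => ψ (t, y)) 0 t := by
    intro t
    have h1 := ((hC2' (t, y) hx.1 hx.2).differentiableAt (by norm_num)).hasFDerivAt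
    have h2 : HasDerivAt (fun t : ℝ => (t, y)) (1, 0) t :=
      (hasDerivAt_id t).prodMk (hasDerivAt_const t y)
    have h3 := h1.comp_hasDerivAt t h2
    have h4 : fderiv ℝ ψ (t, y) (1, 0) = 0 := hzero (t, y) hx.1 hx.2
    rw [h4] at h3
    exact h3
  exact is_const_of_deriv_eq_zero (fun t => (hder t).differentiableAt) (fun t => (hder t).deriv) x₁ 0
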